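/- arXiv:math/0601423 — 2 statements merged into one kernel-verified Lean document; each statement's English description precedes it below -/
import Mathlib

section
/- Let M be a finitely generated R-module and let φ : M → M be an R-linear endomorphism with φ^m = 0 for some m ≥ 1. Suppose M₁ →^α M₀ →^p M → 0 is a free presentation of M over R (M₀ and M₁ finite free R-modules, p surjective, and the image of α equals the kernel of p), and let φ₀ : M₀ → M₀ be an R-linear lifting of φ, i.e. p ∘ φ₀ = φ ∘ p. Let F = ^S M be the S-module obtained from (M, φ). Then the S-linear map π : M₀ ⊗_R S → F determined by v ⊗ 1 ↦ p(v) is surjective, and its kernel equals the image of the S-linear map (M₁ ⊗_R S) ⊕ (M₀ ⊗_R S) → M₀ ⊗_R S whose components are the base change α ⊗ 1 of α and the map (φ₀ ⊗ 1) − x_n·id. Consequently F has the presentation (M₁ ⊗_R S) ⊕ (M₀ ⊗_R S) → M₀ ⊗_R S → F → 0. -/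
open TensorProduct

/-!
Let `M_φ` be `M` with `X` acting as `φ`. Right exactness reduces everything to the case `M₀ = M`,
`p = id`: since `π` is the composite of `p ⊗ 1` with the canonical map `R[X] ⊗ M → M_φ`, the kernel
of `π` is generated by the kernel of `p ⊗ 1`, which is the image of `α ⊗ 1`, and by any lift along
`p ⊗ 1` of the kernel of the canonical map. The latter kernel is the image of `φ ⊗ 1 - X`: modulo
this image, multiplication by `X` agrees with `φ` on the classes of `1 ⊗ v`, so `v ↦ 1 ⊗ v` is
`R[X]`-linear on `M_φ` and inverts the induced map from the cokernel to `M_φ`.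
-/

section Exactness

variable {R A B C A' B' P : Type*} [Ring R]
  [AddCommGroup A] [Module R A] [AddCommGroup B] [Module R B] [AddCommGroup C] [Module R C]
  [AddCommGroup A'] [Module R A'] [AddCommGroup B'] [Module R B'] [AddCommGroup P] [Module R P]

theorem ker_comp_eq_range_sup_range {f : A →ₗ[R] B} {g : B →ₗ[R] C} (hfg : Function.Exact f g)
    {i : P →ₗ[R] B'} {q : B' →ₗ[R] B} (hiq : Function.Exact i q)
    {r : A' →ₗ[R] A} (hr : Function.Surjective r) {f' : A' →ₗ[R] B'} (hf' : q ∘ₗ f' = f ∘ₗ r) :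
    LinearMap.ker (g ∘ₗ q) = LinearMap.range i ⊔ LinearMap.range f' := by
  have range_f : LinearMap.range f = (LinearMap.range f').map q := by
    rw [← LinearMap.range_comp, hf',
      LinearMap.range_comp_of_range_eq_top f (LinearMap.range_eq_top.mpr hr)]
  rw [LinearMap.ker_comp, hfg.linearMap_ker_eq, range_f, Submodule.comap_map_eq,
    hiq.linearMap_ker_eq, sup_comm]

end Exactness

section CharacteristicSequence

open Polynomial

variable {R M N : Type*} [CommRing R] [AddCommGroup M] [Module R M] [AddCommGroup N] [Module R N]

/-- The characteristic endomorphism `φ ⊗ 1 - X` of `R[X] ⊗ M`, whose cokernel is `M` with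
`X` acting as `φ`. The sign is opposite to that of the characteristic matrix. -/
noncomputable def charMap (φ : Module.End R M) : R[X] ⊗[R] M →ₗ[R[X]] R[X] ⊗[R] M :=
  φ.baseChange R[X] - (X : R[X]) • LinearMap.id

/-- The canonical `R[X]`-linear map `f ⊗ v ↦ f • v` onto the `R[X]`-module `M` on which `X` acts
as `φ`. -/
noncomputable def aevalLift (φ : Module.End R M) : R[X] ⊗[R] M →ₗ[R[X]] Module.AEval' φ :=
  (Module.AEval'.of φ).toLinearMap.liftBaseChange R[X]

theorem charMap_one_tmul (φ : Module.End R M) (v : M) :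
    charMap φ (1 ⊗ₜ v) = 1 ⊗ₜ φ v - (X : R[X]) • 1 ⊗ₜ v := rfl

theorem aevalLift_one_tmul (φ : Module.End R M) (v : M) :
    aevalLift φ (1 ⊗ₜ v) = Module.AEval'.of φ v := by
  simp [aevalLift]

theorem aevalLift_surjective (φ : Module.End R M) : Function.Surjective (aevalLift φ) := fun y =>
  ⟨1 ⊗ₜ (Module.AEval'.of φ).symm y, by simp [aevalLift_one_tmul]⟩

theorem aevalLift_comp_charMap (φ : Module.End R M) : aevalLift φ ∘ₗ charMap φ = 0 := by
  ext v
  simp [charMap_one_tmul, aevalLift_one_tmul, Module.AEval'.X_smul_of]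

theorem mkQ_range_charMap_one_tmul_apply (φ : Module.End R M) (v : M) :
    (LinearMap.range (charMap φ)).mkQ (1 ⊗ₜ φ v) =
      (X : R[X]) • (LinearMap.range (charMap φ)).mkQ (1 ⊗ₜ v) := by
  rw [← map_smul, ← sub_eq_zero, ← map_sub, ← charMap_one_tmul, Submodule.mkQ_apply,
    Submodule.Quotient.mk_eq_zero]
  exact LinearMap.mem_range_self _ _

/-- The `R[X]`-linear map from `M`, with `X` acting as `φ`, to the cokernel of `charMap φ` that
sends `v` to the class of `1 ⊗ v`. -/
noncomputable def toCokerCharMap (φ : Module.End R M) :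
    Module.AEval' φ →ₗ[R[X]] (R[X] ⊗[R] M) ⧸ LinearMap.range (charMap φ) :=
  LinearMap.ofAEval φ
    ((LinearMap.range (charMap φ)).mkQ.restrictScalars R ∘ₗ TensorProduct.mk R R[X] M 1)
    (mkQ_range_charMap_one_tmul_apply φ)

theorem toCokerCharMap_of (φ : Module.End R M) (v : M) :
    toCokerCharMap φ (Module.AEval'.of φ v) = (LinearMap.range (charMap φ)).mkQ (1 ⊗ₜ v) := rfl

theorem toCokerCharMap_comp_aevalLift (φ : Module.End R M) :
    toCokerCharMap φ ∘ₗ aevalLift φ = (LinearMap.range (charMap φ)).mkQ := by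
  ext v
  simp [aevalLift_one_tmul, toCokerCharMap_of]

theorem exact_charMap_aevalLift (φ : Module.End R M) :
    Function.Exact (charMap φ) (aevalLift φ) := by
  refine LinearMap.exact_iff.mpr (le_antisymm ?_ ?_)
  · calc LinearMap.ker (aevalLift φ)
        ≤ LinearMap.ker (toCokerCharMap φ ∘ₗ aevalLift φ) := LinearMap.ker_le_ker_comp _ _
      _ = LinearMap.range (charMap φ) := by
          rw [toCokerCharMap_comp_aevalLift, Submodule.ker_mkQ]
  · exact LinearMap.range_le_ker_iff.mpr (aevalLift_comp_charMap φ)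

theorem baseChange_comp_charMap {φ : Module.End R M} {ψ : Module.End R N} {p : N →ₗ[R] M}
    (h : p ∘ₗ ψ = φ ∘ₗ p) :
    p.baseChange R[X] ∘ₗ charMap ψ = charMap φ ∘ₗ p.baseChange R[X] := by
  ext v
  simp [charMap_one_tmul, show p (ψ v) = φ (p v) from LinearMap.congr_fun h v]

theorem ker_aevalLift_comp_baseChange {L : Type*} [AddCommGroup L] [Module R L]
    {φ : Module.End R M} {ψ : Module.End R N} {α : L →ₗ[R] N} {p : N →ₗ[R] M}
    (hαp : Function.Exact α p) (hp : Function.Surjective p) (h : p ∘ₗ ψ = φ ∘ₗ p) :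
    LinearMap.ker (aevalLift φ ∘ₗ p.baseChange R[X]) =
      LinearMap.range (α.baseChange R[X]) ⊔ LinearMap.range (charMap ψ) :=
  ker_comp_eq_range_sup_range (exact_charMap_aevalLift φ) (lTensor_exact R[X] hαp hp)
    (LinearMap.baseChange_surjective R[X] hp) (baseChange_comp_charMap h)

theorem statement2_general {M₀ M₁ : Type*} [AddCommGroup M₀] [Module R M₀]
    [AddCommGroup M₁] [Module R M₁] (φ : M →ₗ[R] M) (α : M₁ →ₗ[R] M₀) (p : M₀ →ₗ[R] M)
    (hp : Function.Surjective p) (hexact : LinearMap.range α = LinearMap.ker p)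
    (φ₀ : M₀ →ₗ[R] M₀) (hlift : p ∘ₗ φ₀ = φ ∘ₗ p)
    (π : R[X] ⊗[R] M₀ →ₗ[R[X]] Module.AEval' φ)
    (hπ : ∀ v : M₀, π (1 ⊗ₜ[R] v) = Module.AEval'.of φ (p v))
    (β : (R[X] ⊗[R] M₁) × (R[X] ⊗[R] M₀) →ₗ[R[X]] R[X] ⊗[R] M₀)
    (hβ₁ : ∀ w : R[X] ⊗[R] M₁, β (w, 0) = α.baseChange R[X] w)
    (hβ₂ : ∀ u : R[X] ⊗[R] M₀, β (0, u) = φ₀.baseChange R[X] u - (X : R[X]) • u) :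
    Function.Surjective π ∧ LinearMap.ker π = LinearMap.range β := by
  have π_eq : π = aevalLift φ ∘ₗ p.baseChange R[X] := by
    ext v
    simp [hπ, aevalLift_one_tmul]
  have β_eq : β = (α.baseChange R[X]).coprod (charMap φ₀) :=
    LinearMap.prod_ext (LinearMap.ext fun w => by simp [hβ₁])
      (LinearMap.ext fun u => by simp [hβ₂, charMap])
  rw [π_eq, β_eq, LinearMap.range_coprod]
  exact ⟨(aevalLift_surjective φ).comp (LinearMap.baseChange_surjective R[X] hp),
    ker_aevalLift_comp_baseChange (LinearMap.exact_iff.mpr hexact.symm) hp hlift⟩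

end CharacteristicSequence

/-- Proposition 2.4 of the paper.
Let `K` be a field, `n ≥ 1`, `R = K[x_0,…,x_{n-1}]` and `S = R[x_n]`.
Let `M` be a finitely generated `R`-module, `φ : M → M` `R`-linear with `φ^m = 0`,
`M₁ →α M₀ →p M → 0` a free presentation of `M` by finite free `R`-modules, and
`φ₀ : M₀ → M₀` a lifting of `φ` (i.e. `p ∘ φ₀ = φ ∘ p`).  Let `F = ^S M` be the
`S`-module obtained from `(M, φ)` (Mathlib's `Module.AEval' φ`).  Then the `S`-linear map
`π : S ⊗_R M₀ → F` determined by `v ⊗ 1 ↦ p v` is surjective and its kernel is the image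
of the `S`-linear map `β : (S ⊗_R M₁) ⊕ (S ⊗_R M₀) → S ⊗_R M₀` whose components are the
base change `α ⊗ 1` of `α` and the map `(φ₀ ⊗ 1) - x_n • id`.  Consequently `F` has the
presentation `(S ⊗_R M₁) ⊕ (S ⊗_R M₀) → S ⊗_R M₀ → F → 0`. -/
theorem statement2 (K : Type*) [Field K] (n : ℕ) (hn : 1 ≤ n)
    (M : Type*) [AddCommGroup M] [Module (MvPolynomial (Fin n) K) M]
    [Module.Finite (MvPolynomial (Fin n) K) M]
    (m : ℕ) (hm : 1 ≤ m)
    (φ : M →ₗ[MvPolynomial (Fin n) K] M) (hφ : φ ^ m = 0)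
    (M₀ M₁ : Type*) [AddCommGroup M₀] [Module (MvPolynomial (Fin n) K) M₀]
    [Module.Finite (MvPolynomial (Fin n) K) M₀] [Module.Free (MvPolynomial (Fin n) K) M₀]
    [AddCommGroup M₁] [Module (MvPolynomial (Fin n) K) M₁]
    [Module.Finite (MvPolynomial (Fin n) K) M₁] [Module.Free (MvPolynomial (Fin n) K) M₁]
    (α : M₁ →ₗ[MvPolynomial (Fin n) K] M₀)
    (p : M₀ →ₗ[MvPolynomial (Fin n) K] M)
    (hp : Function.Surjective p)
    (hexact : LinearMap.range α = LinearMap.ker p)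
    (φ₀ : M₀ →ₗ[MvPolynomial (Fin n) K] M₀)
    (hlift : p ∘ₗ φ₀ = φ ∘ₗ p)
    (π : (Polynomial (MvPolynomial (Fin n) K) ⊗[MvPolynomial (Fin n) K] M₀)
      →ₗ[Polynomial (MvPolynomial (Fin n) K)] Module.AEval' φ)
    (hπ : ∀ v : M₀, π (1 ⊗ₜ[MvPolynomial (Fin n) K] v) = Module.AEval'.of φ (p v))
    (β : ((Polynomial (MvPolynomial (Fin n) K) ⊗[MvPolynomial (Fin n) K] M₁) ×
        (Polynomial (MvPolynomial (Fin n) K) ⊗[MvPolynomial (Fin n) K] M₀))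
      →ₗ[Polynomial (MvPolynomial (Fin n) K)]
        (Polynomial (MvPolynomial (Fin n) K) ⊗[MvPolynomial (Fin n) K] M₀))
    (hβ₁ : ∀ w : Polynomial (MvPolynomial (Fin n) K) ⊗[MvPolynomial (Fin n) K] M₁,
      β (w, 0) = LinearMap.baseChange (Polynomial (MvPolynomial (Fin n) K)) α w)
    (hβ₂ : ∀ u : Polynomial (MvPolynomial (Fin n) K) ⊗[MvPolynomial (Fin n) K] M₀,
      β (0, u) = LinearMap.baseChange (Polynomial (MvPolynomial (Fin n) K)) φ₀ u -
        (Polynomial.X : Polynomial (MvPolynomial (Fin n) K)) • u) :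
    Function.Surjective π ∧ LinearMap.ker π = LinearMap.range β := by
  exact statement2_general φ α p hp hexact φ₀ hlift π hπ β hβ₁ hβ₂
end

section
/- Let F be a finitely generated S-module annihilated by x_n^m for some m ≥ 1. Then the following are equivalent: (i) F admits a finite free resolution of length one over S, i.e. there exist finite free S-modules F₁, F₀ and an exact sequence 0 → F₁ → F₀ → F → 0; (ii) ₍R₎F is a projective R-module. -/
/-!
Let `f` be a monic polynomial over a commutative ring `R` that annihilates the `R[X]`-module `F`.

Given a resolution `0 → F₁ → F₀ → F → 0`, multiplication by `f` maps `F₀` into the image of `F₁`,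
and following it by division by `f` on `F₁` gives an `R`-linear retraction of `F₁ → F₀`. Hence `F`
is an `R`-linear direct summand of the free `R`-module `F₀`.

Conversely, every `R[X]`-module `F` has the characteristic sequence
`0 → R[X] ⊗ F → R[X] ⊗ F → F → 0`, whose first map is `X ⊗ 1 - 1 ⊗ X`; it is exact because it has
an explicit contracting homotopy. If `F` is finite projective over `R`, then both copies of
`R[X] ⊗ F` become free after adding the same complement to each of them.
-/

open Polynomial TensorProduct

section FreeResolution

variable {A M P : Type*} [Ring A] [AddCommGroup M] [Module A M] [AddCommGroup P] [Module A P]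

variable (A M) in
/-- `M` has a resolution `0 → F₁ → F₀ → M → 0` by finite free `A`-modules, which are encoded as
`Fin k → A` and `Fin l → A`. -/
def HasShortFiniteFreeResolution : Prop :=
  ∃ (k l : ℕ) (i : (Fin k → A) →ₗ[A] (Fin l → A)) (q : (Fin l → A) →ₗ[A] M),
    Function.Injective i ∧ Function.Surjective q ∧ LinearMap.range i = LinearMap.ker q

variable (A P) in
theorem exists_pi_linearEquiv_prod_of_finite_projective [Module.Finite A P]
    [Module.Projective A P] :
    ∃ (n : ℕ) (Q : Submodule A (Fin n → A)), Nonempty ((Fin n → A) ≃ₗ[A] Q × P) := by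
  obtain ⟨n, p, s, -, -, hps⟩ := Module.Finite.exists_comp_eq_id_of_projective A P
  exact ⟨n, LinearMap.ker p,
    ⟨(p.exact_subtype_ker_map.splitSurjectiveEquiv (Submodule.subtype_injective _) ⟨s, hps⟩).1⟩⟩

theorem HasShortFiniteFreeResolution.of_exact_endomorphism [Module.Finite A P]
    [Module.Projective A P] {i : P →ₗ[A] P} {q : P →ₗ[A] M}
    (hi : Function.Injective i) (hq : Function.Surjective q) (hiq : Function.Exact i q) :
    HasShortFiniteFreeResolution A M := by
  obtain ⟨n, Q, ⟨e⟩⟩ := exists_pi_linearEquiv_prod_of_finite_projective A P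
  let idProdI : Q × P →ₗ[A] Q × P := LinearMap.id.prodMap i
  have injective_idProdI : Function.Injective idProdI := Function.injective_id.prodMap hi
  have exact_idProdI : Function.Exact idProdI (q ∘ₗ LinearMap.snd A Q P) := by
    rintro ⟨y, x⟩
    simpa [idProdI] using hiq x
  refine ⟨n, n, e.symm ∘ₗ idProdI ∘ₗ e, q ∘ₗ LinearMap.snd A Q P ∘ₗ e, ?_, ?_, ?_⟩
  · exact e.symm.injective.comp (injective_idProdI.comp e.injective)
  · exact hq.comp (Prod.snd_surjective.comp e.surjective)
  · refine (LinearMap.exact_iff.mp fun v => (exact_idProdI (e v)).trans ⟨?_, ?_⟩).symm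
    · rintro ⟨w, hw⟩
      exact ⟨e.symm w, by simp [hw]⟩
    · rintro ⟨w, rfl⟩
      exact ⟨e w, by simp⟩

end FreeResolution

section RestrictScalars

variable {R A M N F : Type*} [CommRing R] [CommRing A] [Algebra R A]
  [AddCommGroup M] [Module A M] [Module R M] [IsScalarTower R A M]
  [AddCommGroup N] [Module A N] [Module R N] [IsScalarTower R A N]
  [AddCommGroup F] [Module A F] [Module R F] [IsScalarTower R A F]

theorem exists_retraction_of_smul_mem_range {i : M →ₗ[A] N} (hi : Function.Injective i) {a : A}
    (ha : ∀ v, a • v ∈ LinearMap.range i) {d : M →ₗ[R] M}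
    (hd : Function.LeftInverse d (a • ·)) :
    ∃ r : N →ₗ[R] M, r ∘ₗ i.restrictScalars R = LinearMap.id := by
  let smulLift : N →ₗ[A] M :=
    (LinearEquiv.ofInjective i hi).symm ∘ₗ (LinearMap.lsmul A N a).codRestrict _ ha
  have i_smulLift (v : N) : i (smulLift v) = a • v :=
    LinearEquiv.ofInjective_symm_apply i (h := hi) ⟨a • v, ha v⟩
  have smulLift_i (y : M) : smulLift (i y) = a • y := hi (by rw [i_smulLift, map_smul])
  refine ⟨d ∘ₗ smulLift.restrictScalars R, LinearMap.ext fun y => ?_⟩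
  simp [smulLift_i, hd y]

theorem projective_of_exact_of_smul_eq_zero [Module.Projective R N] {i : M →ₗ[A] N}
    {q : N →ₗ[A] F} (hi : Function.Injective i) (hq : Function.Surjective q)
    (hiq : Function.Exact i q) {a : A} (ha : ∀ x : F, a • x = 0) {d : M →ₗ[R] M}
    (hd : Function.LeftInverse d (a • ·)) : Module.Projective R F := by
  have smul_mem_range (v : N) : a • v ∈ LinearMap.range i :=
    (hiq _).mp (by rw [map_smul, ha])
  have retraction := exists_retraction_of_smul_mem_range hi smul_mem_range hd
  have exact_over_R : Function.Exact (i.restrictScalars R) (q.restrictScalars R) := hiq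
  obtain ⟨s, hs⟩ := ((exact_over_R.split_tfae hi hq).out 0 1).mpr retraction
  exact .of_split s (q.restrictScalars R) hs

theorem finite_of_isTorsionBySet [Module.Finite A F] {I : Ideal A} [Module.Finite R (A ⧸ I)]
    (hI : Module.IsTorsionBySet A F I) : Module.Finite R F := by
  let := hI.module
  have : Module.Finite (A ⧸ I) F := .of_restrictScalars_finite A _ F
  exact .trans (A ⧸ I) F

end RestrictScalars

section Monic

variable {R F : Type*} [CommRing R] [AddCommGroup F] [Module R[X] F] [Module R F]
  [IsScalarTower R R[X] F] {f : R[X]}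

theorem exists_linearMap_leftInverse_mul_of_monic (hf : f.Monic) :
    ∃ d : R[X] →ₗ[R] R[X], Function.LeftInverse d (f * ·) := by
  have mul_div (p : R[X]) : f * (p /ₘ f) = p - p %ₘ f :=
    eq_sub_of_add_eq' (modByMonic_add_div p f)
  refine ⟨{ toFun := (· /ₘ f), map_add' := fun p q => ?_, map_smul' := fun c p => ?_ },
    fun p => mul_divByMonic_cancel_left p hf⟩ <;> apply hf.isRegular.left
  · simp only [mul_add, mul_div, add_modByMonic, add_sub_add_comm]
  · simp only [mul_smul_comm, mul_div, smul_modByMonic, smul_sub, RingHom.id_apply]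

theorem HasShortFiniteFreeResolution.projective_of_monic_smul_eq_zero (hf : f.Monic)
    (hann : ∀ x : F, f • x = 0) (h : HasShortFiniteFreeResolution R[X] F) :
    Module.Projective R F := by
  obtain ⟨k, l, i, q, hi, hq, hiq⟩ := h
  obtain ⟨d, hd⟩ := exists_linearMap_leftInverse_mul_of_monic hf
  exact projective_of_exact_of_smul_eq_zero hi hq (LinearMap.exact_iff.mpr hiq.symm) hann
    (d := d.compLeft (Fin k)) fun y => funext fun j => hd (y j)

theorem finite_of_monic_smul_eq_zero [Module.Finite R[X] F] (hf : f.Monic)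
    (hann : ∀ x : F, f • x = 0) : Module.Finite R F := by
  have : Module.Finite R (R[X] ⧸ Ideal.span {f}) := hf.finite_quotient
  apply finite_of_isTorsionBySet (I := Ideal.span {f})
  rwa [← Module.isTorsionBySet_iff_is_torsion_by_span, Module.isTorsionBySet_singleton_iff]

end Monic

section CharacteristicSequence

variable (R F : Type*) [CommRing R] [AddCommGroup F] [Module R[X] F] [Module R F]
  [IsScalarTower R R[X] F]

/-- The map `X ⊗ 1 - 1 ⊗ X` on `R[X] ⊗ F`, the first map of the characteristic sequence
`0 → R[X] ⊗ F → R[X] ⊗ F → F → 0`. -/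
noncomputable def characteristicMap : R[X] ⊗[R] F →ₗ[R[X]] R[X] ⊗[R] F :=
  (X : R[X]) • LinearMap.id - (Algebra.lsmul R R F (X : R[X])).baseChange R[X]

/-- The map `p ⊗ x ↦ p • x`, the second map of the characteristic sequence. -/
noncomputable def actionMap : R[X] ⊗[R] F →ₗ[R[X]] F :=
  LinearMap.liftBaseChange R[X] LinearMap.id

/-- The map `X ^ n ⊗ x ↦ ∑ i < n, X ^ i ⊗ X ^ (n - 1 - i) • x`, which is the divided difference
`(X ^ n - Y ^ n) / (X - Y)` with `Y` acting on `F`. Together with `x ↦ 1 ⊗ x` it is a contracting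
homotopy of the characteristic sequence. -/
noncomputable def dividedDifference : R[X] ⊗[R] F →ₗ[R] R[X] ⊗[R] F :=
  TensorProduct.lift <| (basisMonomials R).constr R fun n => ∑ i ∈ Finset.range n,
    TensorProduct.mk R R[X] F (X ^ i) ∘ₗ Algebra.lsmul R R F (X ^ (n - 1 - i) : R[X])

variable {R F}

theorem characteristicMap_tmul (p : R[X]) (x : F) :
    characteristicMap R F (p ⊗ₜ x) = (X * p) ⊗ₜ x - p ⊗ₜ ((X : R[X]) • x) := rfl

theorem actionMap_tmul (p : R[X]) (x : F) : actionMap R F (p ⊗ₜ x) = p • x := rfl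

theorem dividedDifference_X_pow_tmul (n : ℕ) (x : F) :
    dividedDifference R F ((X ^ n) ⊗ₜ x) =
      ∑ i ∈ Finset.range n, (X ^ i) ⊗ₜ ((X ^ (n - 1 - i) : R[X]) • x) := by
  have basisMonomials_eq : basisMonomials R n = X ^ n := by
    simp only [coe_basisMonomials, monomial_one_right_eq_X_pow]
  rw [dividedDifference, lift.tmul, ← basisMonomials_eq, Module.Basis.constr_basis,
    LinearMap.sum_apply]
  rfl

theorem dividedDifference_X_pow_succ_tmul (n : ℕ) (x : F) :
    dividedDifference R F ((X ^ (n + 1)) ⊗ₜ x) =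
      (X ^ n) ⊗ₜ x + dividedDifference R F ((X ^ n) ⊗ₜ ((X : R[X]) • x)) := by
  rw [dividedDifference_X_pow_tmul, dividedDifference_X_pow_tmul, Finset.sum_range_succ, add_comm]
  congr 1
  · simp
  · refine Finset.sum_congr rfl fun i hi => ?_
    rw [smul_smul, ← pow_succ, show n + 1 - 1 - i = n - 1 - i + 1 by grind]

theorem dividedDifference_characteristicMap (v : R[X] ⊗[R] F) :
    dividedDifference R F (characteristicMap R F v) = v := by
  suffices dividedDifference R F ∘ₗ (characteristicMap R F).restrictScalars R = LinearMap.id from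
    LinearMap.congr_fun this v
  ext n x
  simp [monomial_one_right_eq_X_pow, characteristicMap_tmul, ← pow_succ',
    dividedDifference_X_pow_succ_tmul]

theorem characteristicMap_dividedDifference_X_pow_tmul (n : ℕ) (x : F) :
    characteristicMap R F (dividedDifference R F ((X ^ n) ⊗ₜ x)) =
      (X ^ n) ⊗ₜ x - 1 ⊗ₜ ((X ^ n : R[X]) • x) := by
  induction n generalizing x with
  | zero =>
    rw [dividedDifference_X_pow_tmul, Finset.sum_range_zero, map_zero, pow_zero, one_smul, sub_self]
  | succ n ih =>
    rw [dividedDifference_X_pow_succ_tmul, map_add, ih, characteristicMap_tmul, ← pow_succ',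
      smul_smul, ← pow_succ, sub_add_sub_cancel]

theorem characteristicMap_dividedDifference (v : R[X] ⊗[R] F) :
    characteristicMap R F (dividedDifference R F v) = v - 1 ⊗ₜ actionMap R F v := by
  suffices (characteristicMap R F).restrictScalars R ∘ₗ dividedDifference R F =
      LinearMap.id - TensorProduct.mk R R[X] F 1 ∘ₗ (actionMap R F).restrictScalars R from
    LinearMap.congr_fun this v
  ext n x
  simp [monomial_one_right_eq_X_pow, characteristicMap_dividedDifference_X_pow_tmul,
    actionMap_tmul]

theorem characteristicMap_injective : Function.Injective (characteristicMap R F) :=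
  Function.LeftInverse.injective dividedDifference_characteristicMap

theorem actionMap_surjective : Function.Surjective (actionMap R F) := fun x =>
  ⟨1 ⊗ₜ x, by rw [actionMap_tmul, one_smul]⟩

theorem actionMap_characteristicMap (v : R[X] ⊗[R] F) :
    actionMap R F (characteristicMap R F v) = 0 := by
  induction v with
  | zero => simp
  | tmul p x => rw [characteristicMap_tmul, map_sub, actionMap_tmul, actionMap_tmul, mul_comm,
      mul_smul, sub_self]
  | add v w hv hw => rw [map_add, map_add, hv, hw, add_zero]

theorem exact_characteristicMap_actionMap :
    Function.Exact (characteristicMap R F) (actionMap R F) := by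
  refine fun v => ⟨fun hv => ⟨dividedDifference R F v, ?_⟩, ?_⟩
  · rw [characteristicMap_dividedDifference, hv, tmul_zero, sub_zero]
  · rintro ⟨w, rfl⟩
    exact actionMap_characteristicMap w

variable (R F) in
theorem hasShortFiniteFreeResolution_of_finite_projective [Module.Finite R F]
    [Module.Projective R F] : HasShortFiniteFreeResolution R[X] F :=
  .of_exact_endomorphism characteristicMap_injective actionMap_surjective
    exact_characteristicMap_actionMap

end CharacteristicSequence

theorem statement4_general {R F : Type*} [CommRing R] [AddCommGroup F] [Module R[X] F]
    [Module R F] [IsScalarTower R R[X] F] [Module.Finite R[X] F] {f : R[X]} (hf : f.Monic)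
    (hann : ∀ x : F, f • x = 0) :
    HasShortFiniteFreeResolution R[X] F ↔ Module.Projective R F := by
  have : Module.Finite R F := finite_of_monic_smul_eq_zero hf hann
  exact ⟨fun h => h.projective_of_monic_smul_eq_zero hf hann,
    fun _ => hasShortFiniteFreeResolution_of_finite_projective R F⟩

/-- item (1) of Section 2.1 of the paper, via Auslander–Buchsbaum and
Quillen–Suslin.  Let `K` be a field, `n ≥ 1`, `R = K[x_0,…,x_{n-1}]` and `S = R[x_n]`.
Let `F` be a finitely generated `S`-module annihilated by `x_n^m` for some `m ≥ 1`.
Then `F` admits a finite free resolution of length one over `S`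
(an exact sequence `0 → F₁ → F₀ → F → 0` with `F₁`, `F₀` finite free `S`-modules)
if and only if `F`, viewed as an `R`-module by restriction of scalars, is projective. -/
theorem statement4 (K : Type*) [Field K] (n : ℕ) (hn : 1 ≤ n)
    (F : Type*) [AddCommGroup F]
    [Module (Polynomial (MvPolynomial (Fin n) K)) F]
    [Module (MvPolynomial (Fin n) K) F]
    [IsScalarTower (MvPolynomial (Fin n) K) (Polynomial (MvPolynomial (Fin n) K)) F]
    [Module.Finite (Polynomial (MvPolynomial (Fin n) K)) F]
    (m : ℕ) (hm : 1 ≤ m)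
    (hann : ∀ x : F, ((Polynomial.X : Polynomial (MvPolynomial (Fin n) K)) ^ m) • x = 0) :
    (∃ (k l : ℕ)
        (i : (Fin k → Polynomial (MvPolynomial (Fin n) K))
          →ₗ[Polynomial (MvPolynomial (Fin n) K)] (Fin l → Polynomial (MvPolynomial (Fin n) K)))
        (q : (Fin l → Polynomial (MvPolynomial (Fin n) K))
          →ₗ[Polynomial (MvPolynomial (Fin n) K)] F),
          Function.Injective i ∧ Function.Surjective q ∧
            LinearMap.range i = LinearMap.ker q) ↔
      Module.Projective (MvPolynomial (Fin n) K) F := by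
  exact statement4_general (Polynomial.monic_X_pow m) hann
end
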